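/- arXiv:2005.09269 — 4 statements merged into one kernel-verified Lean document; each statement's English description precedes it below -/
import Mathlib

section
/- Let H = {rrb, bby, rby} (the patterns: a triangle with two red edges and one blue edge, a triangle with two blue edges and one yellow edge, and a rainbow triangle with one edge of each color). Then h_2(n, H) = Θ(n^{2/3}): there exist constants C1, C2 > 0 and an integer n0 such that for all n ≥ n0, C1·n^{2/3} ≤ h_2(n, H) ≤ C2·n^{2/3}. -/
/-- The three edge colors: red, blue, yellow. -/
inductive Col : Type
  | r | b | y
  deriving DecidableEq

/-- A (symmetric) 3-edge-coloring of the complete graph `K_n` on vertex set `Fin n`. -/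
structure Coloring (n : ℕ) where
  col : Fin n → Fin n → Col
  symm : ∀ i j, col i j = col j i

/-- The pattern (multiset of edge colors) of the triangle on vertices `u, v, w`. -/
def triPattern {n : ℕ} (c : Coloring n) (u v w : Fin n) : Multiset Col :=
  {c.col u v, c.col v w, c.col u w}

/-- The coloring `c` contains the pattern `P`: some triangle has color multiset `P`. -/
def Contains {n : ℕ} (c : Coloring n) (P : Multiset Col) : Prop :=
  ∃ u v w : Fin n, u ≠ v ∧ v ≠ w ∧ u ≠ w ∧ triPattern c u v w = P

/-- The coloring `c` avoids every pattern in the family `H`. -/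
def Avoids {n : ℕ} (c : Coloring n) (H : Set (Multiset Col)) : Prop :=
  ∀ P ∈ H, ¬ Contains c P

/-- A vertex set `S` is two-colored under `c`: the edges inside `S` use at most
two of the three colors, i.e. some color is missing on the edges inside `S`. -/
def TwoColored {n : ℕ} (c : Coloring n) (S : Finset (Fin n)) : Prop :=
  ∃ x : Col, ∀ i ∈ S, ∀ j ∈ S, i ≠ j → c.col i j ≠ x

/-- `h2 c` is the maximum size of a vertex set whose induced edges use at most
two of the three colors. -/
noncomputable def h2 {n : ℕ} (c : Coloring n) : ℕ :=
  sSup {k | ∃ S : Finset (Fin n), TwoColored c S ∧ S.card = k}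

/-- `h2n n H = min { h2 c : c a 3-edge-coloring of K_n avoiding all patterns in H }`. -/
noncomputable def h2n (n : ℕ) (H : Set (Multiset Col)) : ℕ :=
  sInf {m | ∃ c : Coloring n, Avoids c H ∧ h2 c = m}

/-- Pattern abbreviations. -/
def Prrr : Multiset Col := {Col.r, Col.r, Col.r}
def Pbbb : Multiset Col := {Col.b, Col.b, Col.b}
def Pyyy : Multiset Col := {Col.y, Col.y, Col.y}
def Prrb : Multiset Col := {Col.r, Col.r, Col.b}
def Prry : Multiset Col := {Col.r, Col.r, Col.y}
def Pbbr : Multiset Col := {Col.b, Col.b, Col.r}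
def Pbby : Multiset Col := {Col.b, Col.b, Col.y}
def Pyyr : Multiset Col := {Col.y, Col.y, Col.r}
def Pyyb : Multiset Col := {Col.y, Col.y, Col.b}
def Prby : Multiset Col := {Col.r, Col.b, Col.y}

theorem card_le_h2 {n : ℕ} (c : Coloring n) (S : Finset (Fin n)) (h : TwoColored c S) :
    S.card ≤ h2 c := by
  refine le_csSup ⟨n, ?_⟩ ⟨S, h, rfl⟩
  rintro k ⟨T, -, rfl⟩
  simpa using Finset.card_le_univ T

theorem h2_le {n : ℕ} (c : Coloring n) (K : ℕ)
    (h : ∀ S : Finset (Fin n), TwoColored c S → S.card ≤ K) : h2 c ≤ K := by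
  refine csSup_le ⟨0, ∅, ⟨Col.r, by simp⟩, by simp⟩ ?_
  rintro k ⟨S, hS, rfl⟩
  exact h S hS

theorem pattern_aux (p1 p2 p3 q1 q2 q3 : Prop) [Decidable p1] [Decidable p2] [Decidable p3]
    [Decidable q1] [Decidable q2] [Decidable q3]
    (e1 : p1 → p2 → p3) (e2 : p1 → p3 → p2) (e3 : p2 → p3 → p1)
    (g1 : q1 → q2 → q3) (g2 : q1 → q3 → q2) (g3 : q2 → q3 → q1) :
    let P : Multiset Col := {if ¬ p1 then Col.y else if ¬ q1 then Col.b else Col.r,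
      if ¬ p2 then Col.y else if ¬ q2 then Col.b else Col.r,
      if ¬ p3 then Col.y else if ¬ q3 then Col.b else Col.r}
    ¬ (P = Prrb ∨ P = Pbby ∨ P = Prby) := by
  by_cases a1 : p1 <;> by_cases a2 : p2 <;> by_cases a3 : p3 <;>
  first
  | exact absurd (e1 a1 a2) a3
  | exact absurd (e2 a1 a3) a2
  | exact absurd (e3 a2 a3) a1
  | (by_cases b1 : q1 <;> by_cases b2 : q2 <;> by_cases b3 : q3 <;>
      first
      | exact absurd (g1 b1 b2) b3
      | exact absurd (g2 b1 b3) b2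
      | exact absurd (g3 b2 b3) b1
      | (simp only [a1, a2, a3, b1, b2, b3, not_true_eq_false, not_false_eq_true, if_true,
          if_false]
         decide))

theorem upper_constr (n k : ℕ) (hk : n ≤ k ^ 3) :
    ∃ c : Coloring n, Avoids c {Prrb, Pbby, Prby} ∧ h2 c ≤ k ^ 2 := by
  have : Nonempty (Fin n ↪ Fin k × Fin k × Fin k) := by
    apply Function.Embedding.nonempty_of_card_le
    simp only [Fintype.card_prod, Fintype.card_fin]
    calc n ≤ k ^ 3 := hk
      _ = _ := by ring
  obtain ⟨f⟩ := this
  let c : Coloring n :=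
    { col := fun i j => if (f i).1 ≠ (f j).1 then Col.y else
        if (f i).2.1 ≠ (f j).2.1 then Col.b else Col.r
      symm := by
        intro i j
        simp only [ne_comm] }
  have hc : ∀ i j, c.col i j = if (f i).1 ≠ (f j).1 then Col.y else
        if (f i).2.1 ≠ (f j).2.1 then Col.b else Col.r := fun _ _ => rfl
  refine ⟨c, ?_, ?_⟩
  · rintro P hP ⟨u, v, w, -, -, -, h⟩
    rw [← h] at hP
    simp only [triPattern, hc, Set.mem_insert_iff, Set.mem_singleton_iff] at hP
    exact pattern_aux _ _ _ _ _ _ (by grind) (by grind) (by grind) (by grind) (by grind)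
      (by grind) hP
  · apply h2_le
    rintro S ⟨x, hx⟩
    have key : ∀ g : Fin n → Fin k × Fin k, Set.InjOn g S → S.card ≤ k ^ 2 := by
      intro g hg
      rw [← Finset.card_image_of_injOn hg]
      calc _ ≤ _ := Finset.card_le_univ _
        _ = _ := by simp [sq]
    have hf : ∀ i j, (f i).1 = (f j).1 → (f i).2.1 = (f j).2.1 → (f i).2.2 = (f j).2.2 → i = j := by
      intro i j h1 h2 h3
      exact f.injective (Prod.ext h1 (Prod.ext h2 h3))
    simp only [hc] at hx
    cases x
    · apply key (fun i => ((f i).1, (f i).2.1))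
      intro i hi j hj h
      simp only [Prod.mk.injEq] at h
      have := hx i hi j hj
      grind
    · apply key (fun i => ((f i).1, (f i).2.2))
      intro i hi j hj h
      simp only [Prod.mk.injEq] at h
      have := hx i hi j hj
      grind
    · apply key (fun i => (f i).2)
      intro i hi j hj h
      have := hx i hi j hj
      grind

theorem F1 {n : ℕ} {c : Coloring n} (hc : Avoids c {Prrb, Pbby, Prby}) {u v w : Fin n}
    (huv : u ≠ v) (hvw : v ≠ w) (huw : u ≠ w) (h1 : c.col u v = Col.b) (h2 : c.col u w = Col.y) :
    c.col v w = Col.y := by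
  rcases h : c.col v w
  · exact absurd ⟨u, v, w, huv, hvw, huw, by simp only [triPattern, h1, h2, h]; decide⟩
      (hc Prby (by simp))
  · exact absurd ⟨u, v, w, huv, hvw, huw, by simp only [triPattern, h1, h2, h]; decide⟩
      (hc Pbby (by simp))
  · rfl

theorem F2 {n : ℕ} {c : Coloring n} (hc : Avoids c {Prrb, Pbby, Prby}) {u v w : Fin n}
    (huv : u ≠ v) (hvw : v ≠ w) (huw : u ≠ w) (h1 : c.col u v = Col.b) (h2 : c.col u w = Col.r) :
    c.col v w = Col.b := by
  rcases h : c.col v w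
  · exact absurd ⟨u, v, w, huv, hvw, huw, by simp only [triPattern, h1, h2, h]; decide⟩
      (hc Prrb (by simp))
  · rfl
  · exact absurd ⟨u, v, w, huv, hvw, huw, by simp only [triPattern, h1, h2, h]; decide⟩
      (hc Prby (by simp))

/-- No pair of `S` has color `x`. -/
def FreeOf {n : ℕ} (c : Coloring n) (x : Col) (S : Finset (Fin n)) : Prop :=
  ∀ i ∈ S, ∀ j ∈ S, i ≠ j → c.col i j ≠ x

theorem exists_max {n : ℕ} (P : Finset (Fin n) → Prop) (h0 : P ∅) (N : Finset (Fin n)) :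
    ∃ T ⊆ N, P T ∧ ∀ v ∈ N, v ∉ T → ¬ P (insert v T) := by
  classical
  obtain ⟨T, hT, hmax⟩ := Finset.exists_max_image (N.powerset.filter P) Finset.card
    ⟨∅, by simp [h0]⟩
  simp only [Finset.mem_filter, Finset.mem_powerset] at hT hmax
  refine ⟨T, hT.1, hT.2, fun v hv hvT hP => ?_⟩
  have := hmax (insert v T) ⟨Finset.insert_subset hv hT.1, hP⟩
  rw [Finset.card_insert_of_notMem hvT] at this
  omega

theorem class_lemma {n : ℕ} {c : Coloring n} (hc : Avoids c {Prrb, Pbby, Prby})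
    (C : Finset (Fin n)) : ∃ T ⊆ C, ∃ D ⊆ C, FreeOf c Col.r T ∧ FreeOf c Col.b D ∧
      C.card ≤ T.card * D.card := by
  classical
  obtain ⟨T, hTC, hT, hmax⟩ := exists_max (FreeOf c Col.r) (by simp [FreeOf]) C
  let B : Fin n → Finset (Fin n) := fun t => C.filter (fun v => v = t ∨ c.col t v = Col.r)
  have hcov : C ⊆ T.biUnion B := by
    intro v hv
    simp only [Finset.mem_biUnion, B, Finset.mem_filter]
    by_cases hvT : v ∈ T
    · exact ⟨v, hvT, hv, Or.inl rfl⟩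
    · by_contra hcon
      push Not at hcon
      apply hmax v hv hvT
      intro i hi j hj hij
      rw [Finset.mem_insert] at hi hj
      rcases hi with rfl | hi <;> rcases hj with rfl | hj
      · exact absurd rfl hij
      · rw [c.symm]; exact (hcon j hj hv).2
      · exact (hcon i hi hv).2
      · exact hT i hi j hj hij
  have hB : ∀ t, FreeOf c Col.b (B t) := by
    intro t i hi j hj hij hb
    simp only [B, Finset.mem_filter] at hi hj
    by_cases hit : i = t
    · subst hit
      rcases hj.2 with h | h
      · exact hij h.symm
      · rw [hb] at h; cases h
    · have hir := hi.2.resolve_left hit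
      by_cases hjt : j = t
      · subst hjt
        rw [c.symm, hb] at hir; cases hir
      · have hjr := hj.2.resolve_left hjt
        have := F2 hc hij hjt hit hb (by rw [c.symm]; exact hir)
        rw [c.symm, hjr] at this; cases this
  rcases T.eq_empty_or_nonempty with h | h
  · subst h
    refine ⟨∅, by simp, ∅, by simp, by simp [FreeOf], by simp [FreeOf], ?_⟩
    simpa using hcov
  · obtain ⟨t, ht, htm⟩ := Finset.exists_max_image T (fun t => (B t).card) h
    exact ⟨T, hTC, B t, Finset.filter_subset _ _, hT, hB t,
      (Finset.card_le_card hcov).trans (Finset.card_biUnion_le_card_mul _ _ _ htm)⟩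

theorem lower_real {n : ℕ} {c : Coloring n} (hc : Avoids c {Prrb, Pbby, Prby}) :
    (n : ℝ) ≤ h2 c + Real.sqrt (h2 c) * h2 c := by
  classical
  let N : Finset (Fin n) := Finset.univ.filter (fun u => ∃ v, u ≠ v ∧ c.col u v = Col.b)
  let R : Finset (Fin n) := Finset.univ.filter (fun u => ¬ ∃ v, u ≠ v ∧ c.col u v = Col.b)
  have hNb : ∀ u ∈ N, ∃ v, u ≠ v ∧ c.col u v = Col.b := fun u hu => (Finset.mem_filter.1 hu).2
  have hRb : ∀ u ∈ R, ∀ v, u ≠ v → c.col u v ≠ Col.b := fun u hu v hv hb =>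
    (Finset.mem_filter.1 hu).2 ⟨v, hv, hb⟩
  have hNR : N.card + R.card = n := by
    simpa [N, R] using Finset.card_filter_add_card_filter_not (s := (Finset.univ : Finset (Fin n)))
      (fun u => ∃ v, u ≠ v ∧ c.col u v = Col.b)
  -- transitivity of being non-yellow
  have trans : ∀ u v w, v ∈ N → u ≠ v → v ≠ w → u ≠ w → c.col u v ≠ Col.y →
      c.col v w ≠ Col.y → c.col u w ≠ Col.y := by
    intro u v w hv huv hvw huw h1 h2 h3
    by_cases hb : c.col u v = Col.b
    · exact h2 (F1 hc huv hvw huw hb h3)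
    by_cases hb' : c.col v w = Col.b
    · have := F1 hc hvw.symm huv.symm huw.symm (by rw [c.symm]; exact hb')
        (by rw [c.symm]; exact h3)
      rw [c.symm] at this
      exact h1 this
    have hr : c.col u v = Col.r := by cases h : c.col u v <;> simp_all
    have hr' : c.col v w = Col.r := by cases h : c.col v w <;> simp_all
    obtain ⟨x, hvx, hx⟩ := hNb v hv
    have hxu : x ≠ u := by rintro rfl; rw [c.symm, hr] at hx; cases hx
    have hxw : x ≠ w := by rintro rfl; rw [hr'] at hx; cases hx
    have ux := F2 hc hvx hxu huv.symm hx (by rw [c.symm]; exact hr)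
    have wx := F2 hc hvx hxw hvw hx hr'
    have := F1 hc hxu.symm hxw huw (by rw [c.symm]; exact ux) h3
    rw [wx] at this; cases this
  obtain ⟨Y, hYN, hY, hmax⟩ := exists_max (fun S : Finset (Fin n) =>
    ∀ i ∈ S, ∀ j ∈ S, i ≠ j → c.col i j = Col.y) (by simp) N
  let A : Fin n → Finset (Fin n) := fun t => N.filter (fun v => v = t ∨ c.col t v ≠ Col.y)
  have hAN : ∀ t, A t ⊆ N := fun t => Finset.filter_subset _ _
  have hcov : N ⊆ Y.biUnion A := by
    intro v hv
    simp only [Finset.mem_biUnion, A, Finset.mem_filter]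
    by_cases hvT : v ∈ Y
    · exact ⟨v, hvT, hv, Or.inl rfl⟩
    · by_contra hcon
      push Not at hcon
      apply hmax v hv hvT
      intro i hi j hj hij
      rw [Finset.mem_insert] at hi hj
      rcases hi with rfl | hi <;> rcases hj with rfl | hj
      · exact absurd rfl hij
      · rw [c.symm]; exact (hcon j hj hv).2
      · exact (hcon i hi hv).2
      · exact hY i hi j hj hij
  have hA : ∀ t ∈ Y, FreeOf c Col.y (A t) := by
    intro t ht i hi j hj hij
    simp only [A, Finset.mem_filter] at hi hj
    by_cases hit : i = t
    · subst hit
      exact hj.2.resolve_left hij.symm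
    have hi' := hi.2.resolve_left hit
    rw [c.symm] at hi'
    by_cases hjt : j = t
    · subst hjt; exact hi'
    exact trans i t j (hYN ht) hit (Ne.symm hjt) hij hi' (hj.2.resolve_left hjt)
  -- distinct classes
  have hcross : ∀ s ∈ Y, ∀ t ∈ Y, s ≠ t → ∀ i ∈ A s, ∀ j ∈ A t, i ≠ j ∧ c.col i j = Col.y := by
    intro s hs t ht hst i hi j hj
    have hy := hY s hs t ht hst
    simp only [A, Finset.mem_filter] at hi hj
    -- `t` is yellow to all of `A s`
    have h1 : i ≠ t ∧ c.col i t = Col.y := by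
      by_cases his : i = s
      · subst his; exact ⟨hst, hy⟩
      have hi' := hi.2.resolve_left his
      have hit : i ≠ t := by rintro rfl; exact hi' hy
      refine ⟨hit, ?_⟩
      by_contra hcon
      exact trans s i t hi.1 (Ne.symm his) hit hst hi' hcon hy
    by_cases hjt : j = t
    · subst hjt; exact h1
    have hj' := hj.2.resolve_left hjt
    have hij : i ≠ j := by
      rintro rfl; rw [c.symm] at hj'; exact hj' h1.2
    refine ⟨hij, ?_⟩
    by_contra hcon
    exact trans i j t hj.1 hij hjt h1.1 hcon (by rw [c.symm]; exact hj') h1.2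
  choose T hTs D hDs hT hD hTD using fun t => class_lemma hc (A t)
  have hunion : ∀ (F : Fin n → Finset (Fin n)) (x : Col), x ≠ Col.y → (∀ t, F t ⊆ A t) →
      (∀ t, FreeOf c x (F t)) →
      FreeOf c x (Y.biUnion F) ∧ (Y.biUnion F).card = ∑ t ∈ Y, (F t).card := by
    intro F x hx hF hfree
    constructor
    · intro i hi j hj hij
      simp only [Finset.mem_biUnion] at hi hj
      obtain ⟨s, hs, hi⟩ := hi
      obtain ⟨t, ht, hj⟩ := hj
      by_cases hst : s = t
      · subst hst; exact hfree s i hi j hj hij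
      · rw [(hcross s hs t ht hst i (hF s hi) j (hF t hj)).2]; exact hx.symm
    · apply Finset.card_biUnion
      intro s hs t ht hst
      refine Finset.disjoint_left.2 ?_
      intro i hi hi'
      exact (hcross s hs t ht hst i (hF s hi) i (hF t hi')).1 rfl
  obtain ⟨hTf, hTc⟩ := hunion T Col.r (by decide) hTs hT
  obtain ⟨hDf, hDc⟩ := hunion D Col.b (by decide) hDs hD
  have m1 : ∑ t ∈ Y, (T t).card ≤ h2 c := by
    rw [← hTc]; exact card_le_h2 c _ ⟨_, hTf⟩
  have m2 : R.card + ∑ t ∈ Y, (D t).card ≤ h2 c := by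
    rw [← hDc, ← Finset.card_union_of_disjoint]
    · refine card_le_h2 c _ ⟨Col.b, ?_⟩
      intro i hi j hj hij
      rw [Finset.mem_union] at hi hj
      rcases hi with hi | hi
      · exact hRb i hi j hij
      rcases hj with hj | hj
      · rw [c.symm]; exact hRb j hj i hij.symm
      · exact hDf i hi j hj hij
    · rw [Finset.disjoint_left]
      intro i hi hi'
      obtain ⟨t, ht, hi'⟩ := Finset.mem_biUnion.1 hi'
      obtain ⟨v, hv, hb⟩ := hNb i (hAN t (hDs t hi'))
      exact hRb i hi v hv hb
  have m3 : ∀ t ∈ Y, (A t).card ≤ h2 c := fun t ht => card_le_h2 c _ ⟨_, hA t ht⟩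
  have m4 : N.card ≤ ∑ t ∈ Y, (A t).card :=
    (Finset.card_le_card hcov).trans Finset.card_biUnion_le
  set M := h2 c
  have m5 : ∀ t ∈ Y, ((A t).card : ℝ) ≤ Real.sqrt M * ((((T t).card : ℝ) + (D t).card) / 2) := by
    intro t ht
    have a1 : ((A t).card : ℝ) ≤ M := by exact_mod_cast m3 t ht
    have a2 : ((A t).card : ℝ) ≤ (T t).card * (D t).card := by exact_mod_cast hTD t
    have hs := Real.sq_sqrt (Nat.cast_nonneg (α := ℝ) M)
    apply le_of_sq_le_sq _ (by positivity)
    rw [mul_pow, hs]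
    have a3 : ((T t).card : ℝ) * (D t).card ≤ ((((T t).card : ℝ) + (D t).card) / 2) ^ 2 := by
      nlinarith [sq_nonneg (((T t).card : ℝ) - (D t).card)]
    rw [sq]
    exact mul_le_mul a1 (a2.trans a3) (by positivity) (by positivity)
  have m6 : (N.card : ℝ) ≤ Real.sqrt M * M := by
    calc (N.card : ℝ) ≤ ∑ t ∈ Y, ((A t).card : ℝ) := by exact_mod_cast m4
      _ ≤ ∑ t ∈ Y, Real.sqrt M * ((((T t).card : ℝ) + (D t).card) / 2) := Finset.sum_le_sum m5
      _ = Real.sqrt M * ((∑ t ∈ Y, ((T t).card : ℝ) + ∑ t ∈ Y, ((D t).card : ℝ)) / 2) := by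
        rw [← Finset.mul_sum, ← Finset.sum_div, Finset.sum_add_distrib]
      _ ≤ _ := by
        apply mul_le_mul_of_nonneg_left _ (Real.sqrt_nonneg _)
        have b1 : ∑ t ∈ Y, ((T t).card : ℝ) ≤ M := by exact_mod_cast m1
        have b2 : ∑ t ∈ Y, ((D t).card : ℝ) ≤ M := by
          have : ∑ t ∈ Y, (D t).card ≤ M := by omega
          exact_mod_cast this
        linarith
  have m7 : (R.card : ℝ) ≤ M := by
    have : R.card ≤ M := by omega
    exact_mod_cast this
  have m8 : (n : ℝ) = N.card + R.card := by exact_mod_cast hNR.symm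
  linarith

theorem stmt11 :
    ∃ C1 C2 : ℝ, 0 < C1 ∧ 0 < C2 ∧ ∃ n0 : ℕ, ∀ n : ℕ, n0 ≤ n →
      C1 * (n : ℝ) ^ ((2 : ℝ) / 3) ≤ (h2n n {Prrb, Pbby, Prby} : ℝ) ∧
      (h2n n {Prrb, Pbby, Prby} : ℝ) ≤ C2 * (n : ℝ) ^ ((2 : ℝ) / 3) := by
  refine ⟨1 / 2, 4, by norm_num, by norm_num, 1, fun n hn => ?_⟩
  -- `z` is the cube root of `n`
  obtain ⟨z, hz1, hz3, hz2⟩ : ∃ z : ℝ, 1 ≤ z ∧ z ^ 3 = n ∧ (n : ℝ) ^ ((2 : ℝ) / 3) = z ^ 2 := by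
    have hn' : (1 : ℝ) ≤ n := by exact_mod_cast hn
    refine ⟨(n : ℝ) ^ ((1 : ℝ) / 3), Real.one_le_rpow hn' (by norm_num), ?_, ?_⟩
    · rw [← Real.rpow_natCast, ← Real.rpow_mul (by positivity)]; norm_num
    · rw [← Real.rpow_natCast, ← Real.rpow_mul (by positivity)]; norm_num
  rw [hz2]
  have hk : n ≤ ⌈z⌉₊ ^ 3 := by
    have : (n : ℝ) ≤ (⌈z⌉₊ : ℝ) ^ 3 := by
      rw [← hz3]
      exact pow_le_pow_left₀ (by linarith) (Nat.le_ceil z) 3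
    exact_mod_cast this
  obtain ⟨c, hc, hcu⟩ := upper_constr n ⌈z⌉₊ hk
  constructor
  · obtain ⟨c', hc', he⟩ := Nat.sInf_mem (s := {m | ∃ c : Coloring n,
      Avoids c {Prrb, Pbby, Prby} ∧ h2 c = m}) ⟨_, c, hc, rfl⟩
    have hl := lower_real hc'
    rw [he] at hl
    change (n : ℝ) ≤ (h2n n {Prrb, Pbby, Prby} : ℝ) + Real.sqrt (h2n n {Prrb, Pbby, Prby} : ℝ) *
      (h2n n {Prrb, Pbby, Prby} : ℝ) at hl
    by_contra hcon
    push Not at hcon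
    set M : ℝ := (h2n n {Prrb, Pbby, Prby} : ℝ)
    have hM : 0 ≤ M := Nat.cast_nonneg _
    have hs : Real.sqrt M ≤ 3 / 4 * z := by
      rw [Real.sqrt_le_left (by linarith)]
      nlinarith
    have h1 : Real.sqrt M * M ≤ 3 / 4 * z * (1 / 2 * z ^ 2) :=
      mul_le_mul hs hcon.le hM (by linarith)
    have h2 : z ^ 2 ≤ z ^ 3 := pow_le_pow_right₀ hz1 (by norm_num)
    have h3 : 0 < z ^ 3 := by positivity
    nlinarith
  · have h1 : h2n n {Prrb, Pbby, Prby} ≤ h2 c := Nat.sInf_le ⟨c, hc, rfl⟩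
    have h2 : (h2n n {Prrb, Pbby, Prby} : ℝ) ≤ (⌈z⌉₊ : ℝ) ^ 2 := by exact_mod_cast h1.trans hcu
    have h3 : (⌈z⌉₊ : ℝ) < z + 1 := Nat.ceil_lt_add_one (by linarith)
    have h4 : (⌈z⌉₊ : ℝ) ^ 2 ≤ (2 * z) ^ 2 :=
      pow_le_pow_left₀ (by positivity) (by linarith) 2
    linarith
end

section
/- Let H = {rrr, rrb, rry} (the patterns: a monochromatic red triangle, a triangle with two red edges and one blue edge, and a triangle with two red edges and one yellow edge; equivalently, no two adjacent red edges are allowed). Then for every integer n ≥ 3, h_2(n, H) = ⌈n/2⌉. -/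
theorem pat_two_red (a b c x : Col) (h : ({a, b, c} : Multiset Col) = {Col.r, Col.r, x}) :
    (a = Col.r ∧ b = Col.r) ∨ (b = Col.r ∧ c = Col.r) ∨ (a = Col.r ∧ c = Col.r) := by
  cases a <;> cases b <;> cases c <;> cases x <;> revert h <;> decide

theorem red_adj {n : ℕ} (c : Coloring n) (hc : Avoids c {Prrr, Prrb, Prry})
    (u v w : Fin n) (huv : u ≠ v) (hvw : v ≠ w) (h1 : c.col u v = Col.r)
    (h2 : c.col v w = Col.r) : u = w := by
  by_contra huw
  cases h3 : c.col u w with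
  | r => exact hc Prrr (by simp) ⟨u, v, w, huv, hvw, huw, by simp [triPattern, h1, h2, h3, Prrr]⟩
  | b => exact hc Prrb (by simp) ⟨u, v, w, huv, hvw, huw, by simp [triPattern, h1, h2, h3, Prrb]⟩
  | y => exact hc Prry (by simp) ⟨u, v, w, huv, hvw, huw, by simp [triPattern, h1, h2, h3, Prry]⟩

theorem bddAbove_two {n : ℕ} (c : Coloring n) :
    BddAbove {k | ∃ S : Finset (Fin n), TwoColored c S ∧ S.card = k} := by
  refine ⟨n, ?_⟩
  rintro k ⟨S, -, rfl⟩
  simpa using S.card_le_univ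

theorem lower_bound {n : ℕ} (c : Coloring n) (hc : Avoids c {Prrr, Prrb, Prry}) :
    (n + 1) / 2 ≤ h2 c := by
  classical
  set T : Finset (Fin n) := Finset.univ.filter (fun i => ∃ j, j < i ∧ c.col i j = Col.r) with hT
  have key : T.card ≤ Tᶜ.card := by
    have hex : ∀ i, ∃ j, i ∈ T → j < i ∧ c.col i j = Col.r := by
      intro i
      by_cases hi : i ∈ T
      · obtain ⟨j, hj⟩ := (Finset.mem_filter.1 hi).2
        exact ⟨j, fun _ => hj⟩
      · exact ⟨i, fun h => absurd h hi⟩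
    choose f hf using hex
    apply Finset.card_le_card_of_injOn f
    · intro i hi
      obtain ⟨h1, h2⟩ := hf i hi
      simp only [Finset.coe_compl, Set.mem_compl_iff, Finset.mem_coe]
      intro hfi
      obtain ⟨k, hk, hk2⟩ := (Finset.mem_filter.1 hfi).2
      have := red_adj c hc i (f i) k h1.ne' hk.ne' h2 hk2
      subst this
      exact absurd h1 hk.asymm
    · intro i hi j hj hij
      obtain ⟨h1, h2⟩ := hf i hi
      obtain ⟨h3, h4⟩ := hf j hj
      rw [← hij] at h3 h4
      exact red_adj c hc i (f i) j h1.ne' h3.ne h2 (by rw [c.symm]; exact h4)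
  have hsum : T.card + Tᶜ.card = n := by simp [Finset.card_add_card_compl]
  have htwo : TwoColored c Tᶜ := by
    refine ⟨Col.r, fun i hi j hj hij h => ?_⟩
    rcases lt_or_gt_of_ne hij with h' | h'
    · exact (Finset.mem_compl.1 hj) (Finset.mem_filter.2 ⟨Finset.mem_univ _, i, h', by rw [c.symm]; exact h⟩)
    · exact (Finset.mem_compl.1 hi) (Finset.mem_filter.2 ⟨Finset.mem_univ _, j, h', h⟩)
  have : Tᶜ.card ≤ h2 c := le_csSup (bddAbove_two c) ⟨_, htwo, rfl⟩
  omega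

/-- The extremal coloring: pairs `{2k, 2k+1}` are red, otherwise color by parity. -/
def extCol (n : ℕ) : Coloring n where
  col i j := if i.val / 2 = j.val / 2 then Col.r else
    if i.val % 2 = j.val % 2 then Col.b else Col.y
  symm i j := by simp only [eq_comm]

theorem ext_red {n : ℕ} {i j : Fin n} (h : (extCol n).col i j = Col.r) :
    i.val / 2 = j.val / 2 := by
  simp only [extCol] at h
  split_ifs at h
  assumption

theorem ext_avoids (n : ℕ) : Avoids (extCol n) {Prrr, Prrb, Prry} := by
  have key : ∀ x : Col, ¬ Contains (extCol n) {Col.r, Col.r, x} := by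
    rintro x ⟨u, v, w, huv, hvw, huw, h⟩
    have h' := pat_two_red _ _ _ _ h
    have := Fin.val_ne_of_ne huv
    have := Fin.val_ne_of_ne hvw
    have := Fin.val_ne_of_ne huw
    rcases h' with ⟨h1, h2⟩ | ⟨h1, h2⟩ | ⟨h1, h2⟩ <;>
    · have := ext_red h1
      have := ext_red h2
      omega
  intro P hP
  rcases hP with rfl | rfl | rfl
  · exact key _
  · exact key _
  · exact key _

theorem card_le_div {n : ℕ} (S : Finset (Fin n))
    (h : ∀ i ∈ S, ∀ j ∈ S, i.val / 2 = j.val / 2 → i = j) : S.card ≤ (n + 1) / 2 := by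
  rw [← Finset.card_range ((n + 1) / 2)]
  apply Finset.card_le_card_of_injOn (fun i : Fin n => i.val / 2)
  · intro i _
    have := i.isLt
    simp only [Finset.coe_range, Set.mem_Iio]
    omega
  · intro i hi j hj hij
    exact h i hi j hj hij

theorem ext_card {n : ℕ} (hn : 3 ≤ n) (S : Finset (Fin n)) (hS : TwoColored (extCol n) S) :
    S.card ≤ (n + 1) / 2 := by
  classical
  obtain ⟨x, hx⟩ := hS
  cases x with
  | r =>
    refine card_le_div S fun i hi j hj hij => ?_
    by_contra hne
    exact hx i hi j hj hne (by simp [extCol, hij])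
  | b =>
    have : S.card ≤ (Finset.range 2).card := by
      apply Finset.card_le_card_of_injOn (fun i : Fin n => i.val % 2)
      · intro i _
        simp only [Finset.coe_range, Set.mem_Iio]
        omega
      · intro i hi j hj hij
        by_contra hne
        have hv := Fin.val_ne_of_ne hne
        have hij' : i.val % 2 = j.val % 2 := hij
        refine hx i hi j hj hne ?_
        have : ¬ i.val / 2 = j.val / 2 := by omega
        simp [extCol, hij', this]
    simp only [Finset.card_range] at this
    omega
  | y =>
    by_cases h : ∀ i ∈ S, ∀ j ∈ S, i.val / 2 = j.val / 2 → i = j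
    · exact card_le_div S h
    · push Not at h
      obtain ⟨i, hi, j, hj, hij, hne⟩ := h
      have hsub : S ⊆ {i, j} := by
        intro k hk
        by_contra hkk
        simp only [Finset.mem_insert, Finset.mem_singleton, not_or] at hkk
        obtain ⟨hki, hkj⟩ := hkk
        have h1 := hx k hk i hi hki
        have h2 := hx k hk j hj hkj
        have := Fin.val_ne_of_ne hki
        have := Fin.val_ne_of_ne hkj
        have := Fin.val_ne_of_ne hne
        have hd : ¬ k.val / 2 = i.val / 2 := by omega
        have hd2 : ¬ k.val / 2 = j.val / 2 := by omega
        simp only [extCol, hd, hd2, if_false] at h1 h2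
        split_ifs at h1 h2 <;> simp_all
        omega
      have := (Finset.card_le_card hsub).trans Finset.card_le_two
      omega

theorem stmt14 (n : ℕ) (hn : 3 ≤ n) :
    h2n n {Prrr, Prrb, Prry} = (n + 1) / 2 := by
  have hext : h2 (extCol n) ≤ (n + 1) / 2 := by
    refine csSup_le ⟨0, ∅, ⟨Col.r, by simp⟩, by simp⟩ ?_
    rintro k ⟨S, hS, rfl⟩
    exact ext_card hn S hS
  apply le_antisymm
  · exact le_trans (Nat.sInf_le ⟨extCol n, ext_avoids n, rfl⟩) hext
  · refine le_csInf ⟨_, extCol n, ext_avoids n, rfl⟩ ?_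
    rintro m ⟨c, hc, rfl⟩
    exact lower_bound c hc
end

section
/- Let H = {rrr, rrb, yyr} (the patterns: a monochromatic red triangle, a triangle with two red edges and one blue edge, and a triangle with two yellow edges and one red edge). Then for every positive integer n, g(n) ≤ h_2(n, H) ≤ 2·g(n). -/
/-- The clique number of a graph: the largest size of a clique. -/
noncomputable def cliqueNum {V : Type*} (G : SimpleGraph V) : ℕ :=
  sSup {k | ∃ S : Finset V, G.IsNClique k S}

/-- The independence number of a graph: the largest size of an independent set. -/
noncomputable def indepNum {V : Type*} (G : SimpleGraph V) : ℕ :=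
  cliqueNum Gᶜ

/-- `g(n)`: the smallest independence number of an `n`-vertex graph with no
cycle of length 3 and no cycle of length 5 (i.e. odd girth at least 7). -/
noncomputable def gval (n : ℕ) : ℕ :=
  sInf {m | ∃ G : SimpleGraph (Fin n),
    (∀ (a : Fin n) (w : G.Walk a a), w.IsCycle → w.length ≠ 3 ∧ w.length ≠ 5) ∧
    indepNum G = m}

lemma avoids_iff18 {n : ℕ} (c : Coloring n) :
    Avoids c {Prrr, Prrb, Pyyr} ↔ ∀ u v w : Fin n, u ≠ v → v ≠ w → u ≠ w →
      (c.col u v = Col.r → c.col v w = Col.r → c.col u w = Col.y) ∧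
      (c.col u v = Col.y → c.col v w = Col.y → c.col u w ≠ Col.r) := by
  constructor
  · intro h u v w huv hvw huw
    have h1 : triPattern c u v w ≠ Prrr := fun e =>
      h Prrr (by simp) ⟨u, v, w, huv, hvw, huw, e⟩
    have h2 : triPattern c u v w ≠ Prrb := fun e =>
      h Prrb (by simp) ⟨u, v, w, huv, hvw, huw, e⟩
    have h3 : triPattern c u v w ≠ Pyyr := fun e =>
      h Pyyr (by simp) ⟨u, v, w, huv, hvw, huw, e⟩
    unfold triPattern at h1 h2 h3
    generalize c.col u v = x at *
    generalize c.col v w = y at *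
    generalize c.col u w = z at *
    revert h1 h2 h3
    cases x <;> cases y <;> cases z <;> decide
  · rintro h P hP ⟨u, v, w, huv, hvw, huw, e⟩
    have h1 := h u v w huv hvw huw
    have h2 := h v w u hvw huw.symm huv.symm
    have h3 := h w u v huw.symm huv hvw.symm
    rw [c.symm w u, c.symm v u] at h2
    rw [c.symm w u, c.symm w v] at h3
    unfold triPattern at e
    have hP' : P = Prrr ∨ P = Prrb ∨ P = Pyyr := by simpa using hP
    clear hP h
    generalize c.col u v = x at *
    generalize c.col v w = y at *
    generalize c.col u w = z at *
    rcases hP' with rfl | rfl | rfl <;> revert e h1 h2 h3 <;>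
      cases x <;> cases y <;> cases z <;> decide

lemma le_indepNum18 {n : ℕ} (G : SimpleGraph (Fin n)) (T : Finset (Fin n))
    (hT : ∀ i ∈ T, ∀ j ∈ T, ¬ G.Adj i j) : T.card ≤ indepNum G := by
  refine le_csSup ⟨n, ?_⟩ ⟨T, ?_⟩
  · rintro k ⟨S, hS⟩
    rw [← hS.card_eq]
    simpa using Finset.card_le_univ S
  · refine ⟨?_, rfl⟩
    intro i hi j hj hij
    exact ⟨hij, hT i hi j hj⟩

lemma exists_indep18 {n : ℕ} (G : SimpleGraph (Fin n)) :
    ∃ T : Finset (Fin n), (∀ i ∈ T, ∀ j ∈ T, ¬ G.Adj i j) ∧ T.card = indepNum G := by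
  have : indepNum G ∈ {k | ∃ S : Finset (Fin n), Gᶜ.IsNClique k S} := by
    refine Nat.sSup_mem ⟨0, ∅, by simp⟩ ⟨n, ?_⟩
    rintro k ⟨S, hS⟩
    rw [← hS.card_eq]
    simpa using Finset.card_le_univ S
  obtain ⟨T, hT⟩ := this
  refine ⟨T, fun i hi j hj hij => ?_, hT.card_eq⟩
  exact (hT.isClique hi hj hij.ne).2 hij

lemma le_h2_18 {n : ℕ} (c : Coloring n) (S : Finset (Fin n)) (hS : TwoColored c S) :
    S.card ≤ h2 c := by
  refine le_csSup ⟨n, ?_⟩ ⟨S, hS, rfl⟩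
  rintro k ⟨S, -, rfl⟩
  simpa using Finset.card_le_univ S

lemma h2_le18 {n : ℕ} (c : Coloring n) (m : ℕ) (h : ∀ S, TwoColored c S → S.card ≤ m) :
    h2 c ≤ m := by
  refine csSup_le ⟨0, ∅, ⟨Col.r, by simp⟩, rfl⟩ ?_
  rintro k ⟨S, hS, rfl⟩
  exact h S hS

lemma split18 {n : ℕ} (G : SimpleGraph (Fin n)) (S : Finset (Fin n)) (p : Fin n → Prop)
    (h1 : ∀ i ∈ S, ∀ j ∈ S, p i → p j → ¬ G.Adj i j)
    (h2 : ∀ i ∈ S, ∀ j ∈ S, ¬ p i → ¬ p j → ¬ G.Adj i j) : S.card ≤ 2 * indepNum G := by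
  classical
  have e := Finset.card_filter_add_card_filter_not (s := S) p
  have a := le_indepNum18 G (S.filter p) (by
    intro i hi j hj
    simp only [Finset.mem_filter] at hi hj
    exact h1 i hi.1 j hj.1 hi.2 hj.2)
  have b := le_indepNum18 G (S.filter (fun x => ¬ p x)) (by
    intro i hi j hj
    simp only [Finset.mem_filter] at hi hj
    exact h2 i hi.1 j hj.1 hi.2 hj.2)
  omega

/-- The red graph. -/
def redGraph18 {n : ℕ} (c : Coloring n) : SimpleGraph (Fin n) where
  Adj i j := i ≠ j ∧ c.col i j = Col.r
  symm := ⟨fun i j h => ⟨h.1.symm, by rw [c.symm]; exact h.2⟩⟩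
  loopless := ⟨fun i h => h.1 rfl⟩

lemma red_cycles18 {n : ℕ} (c : Coloring n) (hc : Avoids c {Prrr, Prrb, Pyyr})
    (a : Fin n) (w : (redGraph18 c).Walk a a) (hw : w.IsCycle) :
    w.length ≠ 3 ∧ w.length ≠ 5 := by
  rw [avoids_iff18] at hc
  constructor
  · intro hl
    match w, hl with
    | .cons (v := x) h1 (.cons (v := y) h2 (.cons h3 .nil)), _ =>
      have := (hc a x y h1.1 h2.1 h3.1.symm).1 h1.2 h2.2
      rw [c.symm, h3.2] at this
      cases this
  · intro hl
    match w, hl with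
    | .cons (v := x) h1 (.cons (v := y) h2 (.cons (v := z) h3 (.cons (v := t) h4
        (.cons h5 .nil)))), _ =>
      have hn := hw.support_nodup
      simp at hn
      have e1 := (hc a x y h1.1 h2.1 (by grind)).1 h1.2 h2.2
      have e2 := (hc z t a h4.1 h5.1 (by grind)).1 h4.2 h5.2
      exact (hc z a y (by grind) (by grind) (by grind)).2 e2 e1 (by rw [c.symm]; exact h3.2)

open Classical in
/-- The coloring of a graph: edges red, pairs at distance two yellow, others blue. -/
noncomputable def gcol18 {n : ℕ} (G : SimpleGraph (Fin n)) : Coloring n where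
  col i j := if G.Adj i j then Col.r else if ∃ k, G.Adj i k ∧ G.Adj k j then Col.y else Col.b
  symm i j := by
    have : (∃ k, G.Adj i k ∧ G.Adj k j) ↔ (∃ k, G.Adj j k ∧ G.Adj k i) :=
      ⟨fun ⟨k, h, h'⟩ => ⟨k, h'.symm, h.symm⟩, fun ⟨k, h, h'⟩ => ⟨k, h'.symm, h.symm⟩⟩
    rw [G.adj_comm i j]
    simp only [this]

lemma gcol_r18 {n : ℕ} (G : SimpleGraph (Fin n)) (i j : Fin n) :
    (gcol18 G).col i j = Col.r ↔ G.Adj i j := by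
  by_cases h1 : G.Adj i j <;> by_cases h2 : ∃ k, G.Adj i k ∧ G.Adj k j <;>
    simp only [gcol18, h1, h2] <;> simp

lemma gcol_y18 {n : ℕ} (G : SimpleGraph (Fin n)) (i j : Fin n) :
    (gcol18 G).col i j = Col.y ↔ ¬ G.Adj i j ∧ ∃ k, G.Adj i k ∧ G.Adj k j := by
  by_cases h1 : G.Adj i j <;> by_cases h2 : ∃ k, G.Adj i k ∧ G.Adj k j <;>
    simp only [gcol18, h1, h2] <;> simp

lemma tri18 {n : ℕ} (G : SimpleGraph (Fin n))
    (hG : ∀ (a : Fin n) (w : G.Walk a a), w.IsCycle → w.length ≠ 3 ∧ w.length ≠ 5)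
    (u v w : Fin n) (h1 : G.Adj u v) (h2 : G.Adj v w) : ¬ G.Adj u w := by
  intro h3
  refine (hG u (.cons h1 (.cons h2 (.cons h3.symm .nil))) ?_).1 rfl
  have := h1.ne; have := h2.ne; have := h3.ne
  simp [SimpleGraph.Walk.cons_isCycle_iff, SimpleGraph.Walk.cons_isPath_iff]
  grind

lemma pent18 {n : ℕ} (G : SimpleGraph (Fin n))
    (hG : ∀ (a : Fin n) (w : G.Walk a a), w.IsCycle → w.length ≠ 3 ∧ w.length ≠ 5)
    (u v x w z : Fin n) (h1 : G.Adj u v) (h2 : G.Adj v x) (h3 : G.Adj x w) (h4 : G.Adj w z)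
    (h5 : G.Adj z u) (huw : ¬ G.Adj u w) (hvw : ¬ G.Adj v w) : False := by
  have t := tri18 G hG u v x h1 h2
  have : u ≠ w := by rintro rfl; exact hvw h1.symm
  have : v ≠ w := by rintro rfl; exact huw h1
  have : x ≠ u := by rintro rfl; exact huw h3
  have : z ≠ v := by rintro rfl; exact hvw h4.symm
  have : x ≠ z := by rintro rfl; exact t h5.symm
  refine (hG u (.cons h1 (.cons h2 (.cons h3 (.cons h4 (.cons h5 .nil))))) ?_).2 rfl
  have := h1.ne; have := h2.ne; have := h3.ne; have := h4.ne; have := h5.ne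
  simp [SimpleGraph.Walk.cons_isCycle_iff, SimpleGraph.Walk.cons_isPath_iff]
  grind

lemma gcol_avoids18 {n : ℕ} (G : SimpleGraph (Fin n))
    (hG : ∀ (a : Fin n) (w : G.Walk a a), w.IsCycle → w.length ≠ 3 ∧ w.length ≠ 5) :
    Avoids (gcol18 G) {Prrr, Prrb, Pyyr} := by
  rw [avoids_iff18]
  intro u v w _ _ _
  simp only [gcol_r18, gcol_y18, ne_eq]
  refine ⟨fun h1 h2 => ⟨tri18 G hG u v w h1 h2, v, h1, h2⟩, ?_⟩
  rintro ⟨h1, k, hk, hk'⟩ ⟨h2, l, hl, hl'⟩ h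
  exact pent18 G hG u w l v k h hl'.symm hl.symm hk'.symm hk.symm h1 (fun e => h2 e.symm)

lemma gcol_h2_18 {n : ℕ} (G : SimpleGraph (Fin n))
    (hG : ∀ (a : Fin n) (w : G.Walk a a), w.IsCycle → w.length ≠ 3 ∧ w.length ≠ 5) :
    h2 (gcol18 G) ≤ 2 * indepNum G := by
  apply h2_le18
  rintro S ⟨x, hx⟩
  cases x with
  | r =>
    have := le_indepNum18 G S (fun i hi j hj h => hx i hi j hj h.ne ((gcol_r18 G i j).2 h))
    omega
  | y =>
    have key : ∀ i ∈ S, ∀ j ∈ S, ∀ k ∈ S, G.Adj i j → G.Adj i k → j = k := by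
      intro i hi j hj k hk h1 h2
      by_contra hne
      exact hx j hj k hk hne ((gcol_y18 G j k).2 ⟨tri18 G hG j i k h1.symm h2, i, h1.symm, h2⟩)
    apply split18 G S (fun i => ∀ j ∈ S, G.Adj i j → i < j)
    · intro i hi j hj h1 h2 h
      exact lt_asymm (h1 j hj h) (h2 i hi h.symm)
    · intro i hi j hj h1 h2 h
      push Not at h1 h2
      obtain ⟨a, ha, ha1, ha2⟩ := h1
      obtain ⟨b, hb, hb1, hb2⟩ := h2
      have e1 := key i hi a ha j hj ha1 h
      have e2 := key j hj b hb i hi hb1 h.symm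
      subst e1 e2
      exact h.ne (le_antisymm hb2 ha2)
  | b =>
    rcases S.eq_empty_or_nonempty with rfl | ⟨v, hv⟩
    · simp
    have av := (avoids_iff18 _).1 (gcol_avoids18 G hG)
    have yel : ∀ i ∈ S, i ≠ v → ¬ G.Adj v i → (gcol18 G).col v i = Col.y := by
      intro i hi hne hn
      have h1 := hx v hv i hi hne.symm
      have h2 := (gcol_r18 G v i).not.2 hn
      revert h1 h2
      cases (gcol18 G).col v i <;> simp
    apply split18 G S (fun i => G.Adj v i)
    · intro i hi j hj h1 h2
      exact tri18 G hG i v j h1.symm h2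
    · intro i hi j hj h1 h2 h
      have hi' : i ≠ v := by rintro rfl; exact h2 h
      have hj' : j ≠ v := by rintro rfl; exact h1 h.symm
      refine (av i v j hi' hj'.symm h.ne).2 ?_ (yel j hj hj' h2) ((gcol_r18 G i j).2 h)
      rw [(gcol18 G).symm]
      exact yel i hi hi' h1

theorem stmt18 (n : ℕ) (hn : 0 < n) :
    gval n ≤ h2n n {Prrr, Prrb, Pyyr} ∧ h2n n {Prrr, Prrb, Pyyr} ≤ 2 * gval n := by
  have hne : {m | ∃ G : SimpleGraph (Fin n),
    (∀ (a : Fin n) (w : G.Walk a a), w.IsCycle → w.length ≠ 3 ∧ w.length ≠ 5) ∧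
    indepNum G = m}.Nonempty := by
    refine ⟨_, ⊥, ?_, rfl⟩
    intro a w hw
    cases w with
    | nil => simp
    | cons h _ => exact absurd h (by simp)
  obtain ⟨G, hG, hGm⟩ := Nat.sInf_mem hne
  have hGm' : indepNum G = gval n := hGm
  constructor
  · have hne2 : {m | ∃ c : Coloring n, Avoids c {Prrr, Prrb, Pyyr} ∧ h2 c = m}.Nonempty :=
      ⟨_, gcol18 G, gcol_avoids18 G hG, rfl⟩
    obtain ⟨c, hc, hcm⟩ := Nat.sInf_mem hne2
    have hcm' : h2 c = h2n n {Prrr, Prrb, Pyyr} := hcm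
    rw [← hcm']
    have h1 : gval n ≤ indepNum (redGraph18 c) :=
      Nat.sInf_le ⟨redGraph18 c, red_cycles18 c hc, rfl⟩
    obtain ⟨T, hT, hTc⟩ := exists_indep18 (redGraph18 c)
    have h2 := le_h2_18 c T ⟨Col.r, fun i hi j hj hij h => hT i hi j hj ⟨hij, h⟩⟩
    omega
  · rw [← hGm']
    exact le_trans (Nat.sInf_le ⟨gcol18 G, gcol_avoids18 G hG, rfl⟩) (gcol_h2_18 G hG)
end

section
/- Let G be a simple graph on the vertex set {1, …, N} with N ≥ 2. Then there exists a permutation σ of {1, …, N} such that, writing G' for the graph with edge set {σ(u)σ(v) : uv ∈ E(G)}, the number of common edges satisfies |E(G) ∩ E(G')| ≤ |E(G)|² / C(N, 2), where C(N, 2) = N(N−1)/2 is the binomial coefficient. -/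
theorem edge_trans {N : ℕ} (e f : Sym2 (Fin N)) (he : ¬ e.IsDiag) (hf : ¬ f.IsDiag) :
    ∃ τ : Equiv.Perm (Fin N), Sym2.map τ e = f := by
  induction e using Sym2.ind with
  | _ a b =>
  induction f using Sym2.ind with
  | _ c d =>
  rw [Sym2.mk_isDiag_iff] at he hf
  have h1 : Equiv.swap a c b ≠ c := by
    intro h
    have h2 : Equiv.swap a c b = Equiv.swap a c a := by rw [h, Equiv.swap_apply_left]
    exact he ((Equiv.swap a c).injective h2).symm
  refine ⟨Equiv.swap (Equiv.swap a c b) d * Equiv.swap a c, ?_⟩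
  rw [Sym2.map_mk]
  simp only [Equiv.Perm.coe_mul, Function.comp_apply, Equiv.swap_apply_left]
  rw [Equiv.swap_apply_of_ne_of_ne h1.symm hf]

theorem map_mul_sym2 {N : ℕ} (σ τ : Equiv.Perm (Fin N)) (e : Sym2 (Fin N)) :
    Sym2.map (σ * τ) e = Sym2.map σ (Sym2.map τ e) := by
  rw [Sym2.map_map]; rfl

open Classical in
theorem count_const {N : ℕ} (S : Finset (Sym2 (Fin N))) (e f : Sym2 (Fin N))
    (he : ¬ e.IsDiag) (hf : ¬ f.IsDiag) :
    (∑ σ : Equiv.Perm (Fin N), if Sym2.map σ e ∈ S then 1 else 0) =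
    (∑ σ : Equiv.Perm (Fin N), if Sym2.map σ f ∈ S then 1 else 0) := by
  obtain ⟨τ, rfl⟩ := edge_trans e f he hf
  rw [← Equiv.sum_comp (Equiv.mulRight τ)]
  simp only [Equiv.coe_mulRight, map_mul_sym2]

theorem isDiag_map_perm {N : ℕ} (σ : Equiv.Perm (Fin N)) (e : Sym2 (Fin N)) :
    (Sym2.map σ e).IsDiag ↔ e.IsDiag := by
  induction e using Sym2.ind with
  | _ a b => simp

open Classical in
theorem stmt19 (N : ℕ) (hN : 2 ≤ N) (G : SimpleGraph (Fin N)) :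
    ∃ σ : Equiv.Perm (Fin N),
      ((G.edgeSet ∩ (G.map σ.toEmbedding).edgeSet).ncard : ℝ) ≤
        (G.edgeSet.ncard : ℝ) ^ 2 / (N.choose 2 : ℝ) := by
  set S := G.edgeFinset with hS
  set T : Finset (Sym2 (Fin N)) := Finset.univ.filter (fun e => ¬ e.IsDiag) with hT
  have hTc : T.card = N.choose 2 := by
    have := Sym2.card_subtype_not_diag (α := Fin N)
    rw [Fintype.card_subtype, Fintype.card_fin] at this
    exact this
  have hST : ∀ e ∈ S, ¬ e.IsDiag := fun e he =>
    G.not_isDiag_of_mem_edgeSet (SimpleGraph.mem_edgeFinset.1 he)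
  have hcol : ∀ σ : Equiv.Perm (Fin N),
      (∑ e ∈ T, if Sym2.map σ e ∈ S then 1 else 0) = S.card := by
    intro σ
    rw [← Finset.card_filter]
    refine Finset.card_bij (fun e _ => Sym2.map σ e) ?_ ?_ ?_
    · intro e he
      exact (Finset.mem_filter.1 he).2
    · intro e _ f _ h
      exact Sym2.map.injective σ.injective h
    · intro f hf
      have h : Sym2.map σ (Sym2.map (σ⁻¹ : Equiv.Perm (Fin N)) f) = f := by
        rw [← map_mul_sym2, mul_inv_cancel, Equiv.Perm.coe_one, Sym2.map_id]; rfl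
      refine ⟨Sym2.map (σ⁻¹ : Equiv.Perm (Fin N)) f, ?_, h⟩
      rw [Finset.mem_filter, h, hT, Finset.mem_filter, isDiag_map_perm]
      exact ⟨⟨Finset.mem_univ _, hST f hf⟩, hf⟩
  have hk : ∀ e ∈ S, N.choose 2 * (∑ σ : Equiv.Perm (Fin N), if Sym2.map σ e ∈ S then 1 else 0)
      = Fintype.card (Equiv.Perm (Fin N)) * S.card := by
    intro e he
    have h1 : ∑ f ∈ T, (∑ σ : Equiv.Perm (Fin N), if Sym2.map σ f ∈ S then 1 else 0) =
        ∑ f ∈ T, (∑ σ : Equiv.Perm (Fin N), if Sym2.map σ e ∈ S then 1 else 0) :=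
      Finset.sum_congr rfl fun f hf =>
        count_const S f e (Finset.mem_filter.1 hf).2 (hST e he)
    rw [Finset.sum_const, hTc, smul_eq_mul, Finset.sum_comm] at h1
    rw [← h1, Finset.sum_congr rfl (fun σ _ => hcol σ), Finset.sum_const, smul_eq_mul,
      Finset.card_univ]
  have hinter : ∀ σ : Equiv.Perm (Fin N),
      (G.edgeSet ∩ (G.map σ.toEmbedding).edgeSet).ncard =
        ∑ e ∈ S, if Sym2.map σ e ∈ S then 1 else 0 := by
    intro σ
    rw [← Finset.card_filter, ← Finset.card_image_of_injective _ (Sym2.map.injective σ.injective),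
      ← Set.ncard_coe_finset]
    congr 1
    ext f
    rw [SimpleGraph.edgeSet_map]
    simp only [Set.mem_inter_iff, Set.mem_image, Finset.coe_image, Finset.coe_filter,
      Set.mem_ofPred_eq, hS, SimpleGraph.mem_edgeFinset]
    constructor
    · rintro ⟨h, e, he, rfl⟩
      exact ⟨e, ⟨he, h⟩, rfl⟩
    · rintro ⟨e, ⟨he, h⟩, rfl⟩
      exact ⟨h, e, he, rfl⟩
  have hsum : ∑ σ : Equiv.Perm (Fin N),
      N.choose 2 * (∑ e ∈ S, if Sym2.map σ e ∈ S then 1 else 0) ≤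
      ∑ σ : Equiv.Perm (Fin N), S.card ^ 2 := by
    rw [← Finset.mul_sum, Finset.sum_comm, Finset.mul_sum, Finset.sum_congr rfl hk]
    simp only [Finset.sum_const, smul_eq_mul, Finset.card_univ]
    apply le_of_eq; ring
  obtain ⟨σ, _, hσ⟩ := Finset.exists_le_of_sum_le Finset.univ_nonempty hsum
  refine ⟨σ, ?_⟩
  have hpos : (0 : ℝ) < N.choose 2 := by exact_mod_cast Nat.choose_pos hN
  have hc : G.edgeSet.ncard = S.card := by
    rw [← Set.ncard_coe_finset, hS, SimpleGraph.coe_edgeFinset]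
  rw [le_div_iff₀ hpos, hinter σ, hc, mul_comm]
  exact_mod_cast hσ
end
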